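/- arXiv:2011.12152 — 8 statements merged into one kernel-verified Lean document; each statement's English description precedes it below -/
import Mathlib

section
/- Let α, β, γ ∈ (0, π) be real numbers and let a, b, c be positive real numbers satisfying the three law-of-cosines relations a² = b² + c² − 2·b·c·cos α, b² = a² + c² − 2·a·c·cos β, and c² = a² + b² − 2·a·b·cos γ. Then α + β + γ = π. -/
open Real

/-!
A triangle in the plane `ℂ` with two sides `b` and `c` enclosing the angle `α` has third side `a` by
the law of cosines. Conversely, side lengths determine the angles of a triangle, again by the law of
cosines, so `α`, `β`, `γ` are the angles of this triangle and sum to `π`.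
-/

open EuclideanGeometry

theorem norm_ofReal_sub_mul_exp_sq (r s θ : ℝ) :
    ‖(r : ℂ) - s * Complex.exp (θ * Complex.I)‖ ^ 2 = r ^ 2 + s ^ 2 - 2 * r * s * cos θ := by
  rw [Complex.sq_norm, Complex.normSq_apply]
  simp only [Complex.sub_re, Complex.sub_im, Complex.ofReal_re, Complex.ofReal_im,
    Complex.re_ofReal_mul, Complex.im_ofReal_mul, Complex.exp_ofReal_mul_I_re,
    Complex.exp_ofReal_mul_I_im]
  linear_combination s ^ 2 * sin_sq_add_cos_sq θ

theorem exists_dist_eq_of_law_cos {a b c θ : ℝ} (ha : 0 ≤ a) (hb : 0 ≤ b) (hc : 0 ≤ c)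
    (h : a ^ 2 = b ^ 2 + c ^ 2 - 2 * b * c * cos θ) :
    ∃ A B C : ℂ, dist B C = a ∧ dist A C = b ∧ dist A B = c := by
  refine ⟨0, c * Complex.exp (θ * Complex.I), b, ?_, ?_, ?_⟩
  · rw [← pow_left_inj₀ dist_nonneg ha two_ne_zero, dist_eq_norm', norm_ofReal_sub_mul_exp_sq, h]
  · rw [dist_zero_left, Complex.norm_of_nonneg hb]
  · rw [dist_zero_left, norm_mul, Complex.norm_exp_ofReal_mul_I, mul_one,
      Complex.norm_of_nonneg hc]

theorem angle_eq_of_law_cos {V P : Type*} [NormedAddCommGroup V] [InnerProductSpace ℝ V]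
    [MetricSpace P] [NormedAddTorsor V P] {p₁ p₂ p₃ : P} {θ : ℝ} (h₁₂ : p₁ ≠ p₂) (h₃₂ : p₃ ≠ p₂)
    (hθ : θ ∈ Set.Icc 0 π)
    (h : dist p₁ p₃ ^ 2 =
      dist p₁ p₂ ^ 2 + dist p₃ p₂ ^ 2 - 2 * dist p₁ p₂ * dist p₃ p₂ * cos θ) :
    ∠ p₁ p₂ p₃ = θ := by
  have hcos : 2 * dist p₁ p₂ * dist p₃ p₂ * cos (∠ p₁ p₂ p₃) =
      2 * dist p₁ p₂ * dist p₃ p₂ * cos θ := by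
    linarith [law_cos p₁ p₂ p₃]
  have hne : 2 * dist p₁ p₂ * dist p₃ p₂ ≠ 0 :=
    mul_ne_zero (mul_ne_zero two_ne_zero (dist_ne_zero.2 h₁₂)) (dist_ne_zero.2 h₃₂)
  exact injOn_cos ⟨angle_nonneg p₁ p₂ p₃, angle_le_pi p₁ p₂ p₃⟩ hθ (mul_left_cancel₀ hne hcos)

theorem trigon_angle_sum
    (α β γ : ℝ) (hα : α ∈ Set.Ioo 0 π) (hβ : β ∈ Set.Ioo 0 π) (hγ : γ ∈ Set.Ioo 0 π)
    (a b c : ℝ) (ha : 0 < a) (hb : 0 < b) (hc : 0 < c)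
    (h1 : a ^ 2 = b ^ 2 + c ^ 2 - 2 * b * c * Real.cos α)
    (h2 : b ^ 2 = a ^ 2 + c ^ 2 - 2 * a * c * Real.cos β)
    (h3 : c ^ 2 = a ^ 2 + b ^ 2 - 2 * a * b * Real.cos γ) :
    α + β + γ = π := by
  obtain ⟨A, B, C, rfl, rfl, rfl⟩ := exists_dist_eq_of_law_cos ha.le hb.le hc.le h1
  rw [dist_pos] at ha hb hc
  have hA : ∠ C A B = α := angle_eq_of_law_cos hb.symm hc.symm (Set.Ioo_subset_Icc_self hα)
    (by simpa only [dist_comm] using h1)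
  have hB : ∠ A B C = β := angle_eq_of_law_cos hc ha.symm (Set.Ioo_subset_Icc_self hβ)
    (by rw [h2, dist_comm C B]; ring)
  have hC : ∠ B C A = γ := angle_eq_of_law_cos ha hb (Set.Ioo_subset_Icc_self hγ)
    (by rw [dist_comm B A, h3])
  linarith [angle_add_angle_add_angle_eq_pi C hc.symm]
end

section
/- Let α, β, γ ∈ (0, π) be real numbers. Suppose (a, b, c) and (a', b', c') are two triples of positive real numbers each satisfying the three equations a² = b² + c² − 2·b·c·cos α, b² = a² + c² − 2·a·c·cos β, c² = a² + b² − 2·a·b·cos γ (and likewise for a', b', c'). Then there exists a real number t > 0 such that a' = t·a, b' = t·b and c' = t·c. -/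
open Real

/-!
Adding two of the three cosine laws and cancelling a side gives a projection formula such as
`a = b * cos γ + c * cos β`. The formulas for `a` and `b` are linear in the sides, with
determinant `1 - cos γ ^ 2 ≠ 0` in the unknowns `a` and `b`. They therefore determine `a` and `b`
linearly from `c`, so any two solutions are proportional.
-/

theorem eq_projections_of_cosine_laws {R : Type*} [CommRing R] [IsDomain R] [NeZero (2 : R)]
    {y z a b c : R} (ha : a ≠ 0)
    (hb : b ^ 2 = a ^ 2 + c ^ 2 - 2 * a * c * y)
    (hc : c ^ 2 = a ^ 2 + b ^ 2 - 2 * a * b * z) :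
    a = b * z + c * y := by
  apply mul_left_cancel₀ (mul_ne_zero two_ne_zero ha)
  linear_combination -hb - hc

section Projections

variable {R : Type*} [CommRing R] {x y z a b c a' b' c' : R}

theorem mul_one_sub_sq_eq_of_projections (ha : a = b * z + c * y) (hb : b = a * z + c * x) :
    a * (1 - z ^ 2) = c * (y + x * z) := by
  linear_combination ha + z * hb

variable [IsDomain R]

theorem mul_eq_mul_base_of_projections (hz : 1 - z ^ 2 ≠ 0)
    (ha : a = b * z + c * y) (hb : b = a * z + c * x)
    (ha' : a' = b' * z + c' * y) (hb' : b' = a' * z + c' * x) :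
    c' * a = a' * c := by
  have hac := mul_one_sub_sq_eq_of_projections ha hb
  have hac' := mul_one_sub_sq_eq_of_projections ha' hb'
  apply mul_right_cancel₀ hz
  linear_combination c' * hac - c * hac'

theorem mul_eq_mul_of_projections (hz : 1 - z ^ 2 ≠ 0)
    (ha : a = b * z + c * y) (hb : b = a * z + c * x)
    (ha' : a' = b' * z + c' * y) (hb' : b' = a' * z + c' * x) :
    b' * a = a' * b := by
  have hca := mul_eq_mul_base_of_projections hz ha hb ha' hb'
  have hbc := mul_one_sub_sq_eq_of_projections hb ha
  have hbc' := mul_one_sub_sq_eq_of_projections hb' ha'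
  apply mul_right_cancel₀ hz
  calc
    b' * a * (1 - z ^ 2) = c' * a * (x + y * z) := by linear_combination a * hbc'
    _ = a' * c * (x + y * z) := by rw [hca]
    _ = a' * b * (1 - z ^ 2) := by linear_combination -a' * hbc

end Projections

theorem trigon_distance_unique_up_to_scalar_general {K : Type*} [Field K] [NeZero (2 : K)]
    {x y z a b c a' b' c' : K} (hz : z ^ 2 ≠ 1)
    (ha : a ≠ 0) (hb : b ≠ 0) (ha' : a' ≠ 0) (hb' : b' ≠ 0)
    (h1 : a ^ 2 = b ^ 2 + c ^ 2 - 2 * b * c * x)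
    (h2 : b ^ 2 = a ^ 2 + c ^ 2 - 2 * a * c * y)
    (h3 : c ^ 2 = a ^ 2 + b ^ 2 - 2 * a * b * z)
    (h1' : a' ^ 2 = b' ^ 2 + c' ^ 2 - 2 * b' * c' * x)
    (h2' : b' ^ 2 = a' ^ 2 + c' ^ 2 - 2 * a' * c' * y)
    (h3' : c' ^ 2 = a' ^ 2 + b' ^ 2 - 2 * a' * b' * z) :
    ∃ t : K, t ≠ 0 ∧ a' = t * a ∧ b' = t * b ∧ c' = t * c := by
  have hdet : 1 - z ^ 2 ≠ 0 := sub_ne_zero.mpr hz.symm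
  have hpa : a = b * z + c * y := eq_projections_of_cosine_laws ha h2 h3
  have hpb : b = a * z + c * x := eq_projections_of_cosine_laws hb h1 (by linear_combination h3)
  have hpa' : a' = b' * z + c' * y := eq_projections_of_cosine_laws ha' h2' h3'
  have hpb' : b' = a' * z + c' * x :=
    eq_projections_of_cosine_laws hb' h1' (by linear_combination h3')
  refine ⟨a' / a, div_ne_zero ha' ha, (div_mul_cancel₀ a' ha).symm, ?_, ?_⟩
  · rw [div_mul_eq_mul_div, eq_div_iff ha]
    exact mul_eq_mul_of_projections hdet hpa hpb hpa' hpb'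
  · rw [div_mul_eq_mul_div, eq_div_iff ha]
    exact mul_eq_mul_base_of_projections hdet hpa hpb hpa' hpb'

theorem cos_sq_ne_one_of_mem_Ioo {γ : ℝ} (hγ : γ ∈ Set.Ioo 0 π) : cos γ ^ 2 ≠ 1 := by
  rw [cos_sq', Ne, sub_eq_self]
  exact pow_ne_zero 2 (sin_pos_of_mem_Ioo hγ).ne'

theorem trigon_distance_unique_up_to_scalar
    (α β γ : ℝ) (hα : α ∈ Set.Ioo 0 π) (hβ : β ∈ Set.Ioo 0 π) (hγ : γ ∈ Set.Ioo 0 π)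
    (a b c a' b' c' : ℝ) (ha : 0 < a) (hb : 0 < b) (hc : 0 < c)
    (ha' : 0 < a') (hb' : 0 < b') (hc' : 0 < c')
    (h1 : a ^ 2 = b ^ 2 + c ^ 2 - 2 * b * c * Real.cos α)
    (h2 : b ^ 2 = a ^ 2 + c ^ 2 - 2 * a * c * Real.cos β)
    (h3 : c ^ 2 = a ^ 2 + b ^ 2 - 2 * a * b * Real.cos γ)
    (h1' : a' ^ 2 = b' ^ 2 + c' ^ 2 - 2 * b' * c' * Real.cos α)
    (h2' : b' ^ 2 = a' ^ 2 + c' ^ 2 - 2 * a' * c' * Real.cos β)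
    (h3' : c' ^ 2 = a' ^ 2 + b' ^ 2 - 2 * a' * b' * Real.cos γ) :
    ∃ t : ℝ, 0 < t ∧ a' = t * a ∧ b' = t * b ∧ c' = t * c := by
  obtain ⟨t, -, hat, hbct⟩ := trigon_distance_unique_up_to_scalar_general
    (cos_sq_ne_one_of_mem_Ioo hγ) ha.ne' hb.ne' ha'.ne' hb'.ne' h1 h2 h3 h1' h2' h3'
  exact ⟨t, (mul_pos_iff_of_pos_right ha).mp (hat ▸ ha'), hat, hbct⟩
end

section
/- Let α, β, γ, α', β', γ' ∈ (0, π) be real numbers satisfying α + β + γ = π, α' + β' + γ' = π and α' = π − α. Then there exist positive real numbers a, a', x, x', h satisfying a·sin β = h·sin α, h·sin γ = x·sin β, a'·sin β' = h·sin α', h·sin γ' = x'·sin β', and a·sin β = a'·sin β'; moreover any two such positive 5-tuples (a, a', x, x', h) are positive scalar multiples of each other, and every such solution also satisfies (x + x')·sin β' = a·sin(β + β'). -/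
open Real

/-!
Let `B` lie between `A` and `C`, with `x = AB`, `x' = BC`, `a = AD`, `a' = CD`, `h = BD`. The
segment `BD` cuts the tetragon into the triangles `ABD` and `CBD`. By the law of sines the angles of
each of them determine its sides once the common side `h` is chosen, so `h` is the free scale; both
triangles then have the same altitude `a sin β = h sin α = h sin α' = a' sin β'` from `D`. The
projection formula gives `x = a cos β + h cos α` and `x' = a' cos β' - h cos α`, so that
`x + x' = a cos β + a' cos β'`; multiplying by `sin β'` and using the common altitude gives the law
of sines for `ADC`.
-/

/-- The law of sines for a triangle with sides `a`, `b`, `c` opposite to the angles `α`, `β`, `γ`,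
cross-multiplied so that no division occurs. The relation between `a` and `c` is left out: it
follows when `sin β ≠ 0`. -/
structure SineLaw (α β γ a b c : ℝ) : Prop where
  first_second : a * sin β = b * sin α
  second_third : b * sin γ = c * sin β

namespace SineLaw

variable {α β γ a b c α' β' γ' a' c' : ℝ}

theorem exists_pos_sides (hα : 0 < sin α) (hβ : 0 < sin β) (hγ : 0 < sin γ) (hb : 0 < b) :
    ∃ a c : ℝ, 0 < a ∧ 0 < c ∧ SineLaw α β γ a b c :=
  ⟨b * sin α / sin β, b * sin γ / sin β, by positivity, by positivity,
    div_mul_cancel₀ _ hβ.ne', (div_mul_cancel₀ _ hβ.ne').symm⟩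

theorem sides_unique (hβ : sin β ≠ 0) (T : SineLaw α β γ a b c) (T' : SineLaw α β γ a' b c') :
    a = a' ∧ c = c' :=
  ⟨mul_right_cancel₀ hβ (T.first_second.trans T'.first_second.symm),
    mul_right_cancel₀ hβ (T.second_third.symm.trans T'.second_third)⟩

theorem scale (T : SineLaw α β γ a b c) (t : ℝ) : SineLaw α β γ (t * a) (t * b) (t * c) where
  first_second := by rw [mul_assoc, T.first_second, mul_assoc]
  second_third := by rw [mul_assoc, T.second_third, mul_assoc]

theorem projection_formula (hβ : sin β ≠ 0) (hsum : α + β + γ = π) (T : SineLaw α β γ a b c) :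
    c = a * cos β + b * cos α := by
  have hγ : sin γ = sin (α + β) := by rw [← sin_pi_sub, ← hsum, add_sub_cancel_right]
  apply mul_right_cancel₀ hβ
  calc
    c * sin β = b * sin (α + β) := by rw [← T.second_third, hγ]
    _ = b * sin α * cos β + b * cos α * sin β := by rw [sin_add]; ring
    _ = (a * cos β + b * cos α) * sin β := by rw [← T.first_second]; ring

theorem altitude_eq (hα : sin α' = sin α) (T : SineLaw α β γ a b c)
    (T' : SineLaw α' β' γ' a' b c') : a * sin β = a' * sin β' := by
  rw [T.first_second, T'.first_second, hα]

theorem add_mul_sin_of_supplementary (hβ : sin β ≠ 0) (hβ' : sin β' ≠ 0)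
    (hsum : α + β + γ = π) (hsum' : α' + β' + γ' = π) (hsupp : α' = π - α)
    (T : SineLaw α β γ a b c) (T' : SineLaw α' β' γ' a' b c') :
    (c + c') * sin β' = a * sin (β + β') := by
  have altitude : a * sin β = a' * sin β' := T.altitude_eq (by rw [hsupp, sin_pi_sub]) T'
  have base : c + c' = a * cos β + a' * cos β' := by
    rw [T.projection_formula hβ hsum, T'.projection_formula hβ' hsum', hsupp, cos_pi_sub]
    ring
  calc
    (c + c') * sin β' = a * cos β * sin β' + a' * sin β' * cos β' := by rw [base]; ring
    _ = a * cos β * sin β' + a * sin β * cos β' := by rw [altitude]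
    _ = a * sin (β + β') := by rw [sin_add]; ring

end SineLaw

theorem degenerate_tetragon_sufficiency
    (α β γ α' β' γ' : ℝ)
    (hα : α ∈ Set.Ioo 0 π) (hβ : β ∈ Set.Ioo 0 π) (hγ : γ ∈ Set.Ioo 0 π)
    (hα' : α' ∈ Set.Ioo 0 π) (hβ' : β' ∈ Set.Ioo 0 π) (hγ' : γ' ∈ Set.Ioo 0 π)
    (hsum1 : α + β + γ = π) (hsum2 : α' + β' + γ' = π) (hsupp : α' = π - α) :
    (∃ a a' x x' h : ℝ, 0 < a ∧ 0 < a' ∧ 0 < x ∧ 0 < x' ∧ 0 < h ∧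
      a * Real.sin β = h * Real.sin α ∧
      h * Real.sin γ = x * Real.sin β ∧
      a' * Real.sin β' = h * Real.sin α' ∧
      h * Real.sin γ' = x' * Real.sin β' ∧
      a * Real.sin β = a' * Real.sin β') ∧
    (∀ a a' x x' h a₂ a₂' x₂ x₂' h₂ : ℝ,
      0 < a → 0 < a' → 0 < x → 0 < x' → 0 < h →
      0 < a₂ → 0 < a₂' → 0 < x₂ → 0 < x₂' → 0 < h₂ →
      a * Real.sin β = h * Real.sin α →
      h * Real.sin γ = x * Real.sin β →
      a' * Real.sin β' = h * Real.sin α' →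
      h * Real.sin γ' = x' * Real.sin β' →
      a * Real.sin β = a' * Real.sin β' →
      a₂ * Real.sin β = h₂ * Real.sin α →
      h₂ * Real.sin γ = x₂ * Real.sin β →
      a₂' * Real.sin β' = h₂ * Real.sin α' →
      h₂ * Real.sin γ' = x₂' * Real.sin β' →
      a₂ * Real.sin β = a₂' * Real.sin β' →
      ∃ t : ℝ, 0 < t ∧ a₂ = t * a ∧ a₂' = t * a' ∧ x₂ = t * x ∧ x₂' = t * x' ∧
        h₂ = t * h) ∧
    (∀ a a' x x' h : ℝ,
      0 < a → 0 < a' → 0 < x → 0 < x' → 0 < h →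
      a * Real.sin β = h * Real.sin α →
      h * Real.sin γ = x * Real.sin β →
      a' * Real.sin β' = h * Real.sin α' →
      h * Real.sin γ' = x' * Real.sin β' →
      a * Real.sin β = a' * Real.sin β' →
      (x + x') * Real.sin β' = a * Real.sin (β + β')) := by
  have sin_β : 0 < sin β := sin_pos_of_mem_Ioo hβ
  have sin_β' : 0 < sin β' := sin_pos_of_mem_Ioo hβ'
  refine ⟨?existence, ?uniqueness, ?collinearity⟩
  case existence =>
    obtain ⟨a, x, ha, hx, T⟩ := SineLaw.exists_pos_sides
      (sin_pos_of_mem_Ioo hα) sin_β (sin_pos_of_mem_Ioo hγ) one_pos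
    obtain ⟨a', x', ha', hx', T'⟩ := SineLaw.exists_pos_sides
      (sin_pos_of_mem_Ioo hα') sin_β' (sin_pos_of_mem_Ioo hγ') one_pos
    exact ⟨a, a', x, x', 1, ha, ha', hx, hx', one_pos, T.1, T.2, T'.1, T'.2,
      T.altitude_eq (by rw [hsupp, sin_pi_sub]) T'⟩
  case uniqueness =>
    intro a a' x x' h a₂ a₂' x₂ x₂' h₂ _ _ _ _ hh _ _ _ _ hh₂ p₁ p₂ p₃ p₄ _ q₁ q₂ q₃ q₄ _
    obtain ⟨t, rfl⟩ : ∃ t, h₂ = t * h := ⟨h₂ / h, (div_mul_cancel₀ _ hh.ne').symm⟩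
    obtain ⟨ha, hx⟩ := SineLaw.sides_unique sin_β.ne' ⟨q₁, q₂⟩ (SineLaw.scale ⟨p₁, p₂⟩ t)
    obtain ⟨ha', hx'⟩ := SineLaw.sides_unique sin_β'.ne' ⟨q₃, q₄⟩ (SineLaw.scale ⟨p₃, p₄⟩ t)
    exact ⟨t, pos_of_mul_pos_left hh₂ hh.le, ha, ha', hx, hx', rfl⟩
  case collinearity =>
    intro a a' x x' h _ _ _ _ _ p₁ p₂ p₃ p₄ _
    exact SineLaw.add_mul_sin_of_supplementary sin_β.ne' sin_β'.ne' hsum1 hsum2 hsupp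
      ⟨p₁, p₂⟩ ⟨p₃, p₄⟩
end

section
/- Let V be a real inner product space and let A, B, C, D ∈ V be four points no three of which are collinear (for every three of the four points, ¬ Collinear ℝ of that triple). Then sin(∠ B A D) · sin(∠ C B D) · sin(∠ A C D) = sin(∠ C A D) · sin(∠ A B D) · sin(∠ B C D). -/
/-!
Join `D` to the vertices of the triangle `A B C`. In the face with vertices `X`, `Y`, `D`, the law
of sines reads `sin (∠ Y X D) * dist X D = sin (∠ X Y D) * dist Y D`. On multiplying these around
the triangle, each distance to `D` occurs once on either side and cancels. The same argument works
for any closed polygon in place of the triangle, a permutation sending each vertex to the next.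
-/

open Real EuclideanGeometry

section

variable {V P : Type*} [NormedAddCommGroup V] [InnerProductSpace ℝ V] [MetricSpace P]
  [NormedAddTorsor V P]

theorem sin_angle_mul_dist_swap (X Y S : P) :
    sin (∠ Y X S) * dist X S = sin (∠ X Y S) * dist Y S := by
  rw [law_sin, angle_comm, dist_comm]

theorem prod_sin_angle_perm_swap {ι : Type*} [Fintype ι] (σ : Equiv.Perm ι) (p : ι → P) {S : P}
    (hp : ∀ i, p i ≠ S) :
    ∏ i, sin (∠ (p (σ i)) (p i) S) = ∏ i, sin (∠ (p i) (p (σ i)) S) := by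
  have dist_prod_ne_zero : ∏ i, dist (p i) S ≠ 0 :=
    Finset.prod_ne_zero_iff.mpr fun i _ ↦ dist_ne_zero.mpr (hp i)
  apply mul_right_cancel₀ dist_prod_ne_zero
  calc
    (∏ i, sin (∠ (p (σ i)) (p i) S)) * ∏ i, dist (p i) S
        = ∏ i, sin (∠ (p (σ i)) (p i) S) * dist (p i) S := Finset.prod_mul_distrib.symm
    _ = ∏ i, sin (∠ (p i) (p (σ i)) S) * dist (p (σ i)) S :=
      Finset.prod_congr rfl fun i _ ↦ sin_angle_mul_dist_swap (p i) (p (σ i)) S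
    _ = (∏ i, sin (∠ (p i) (p (σ i)) S)) * ∏ i, dist (p (σ i)) S := Finset.prod_mul_distrib
    _ = (∏ i, sin (∠ (p i) (p (σ i)) S)) * ∏ i, dist (p i) S := by
      rw [Equiv.prod_comp σ fun i ↦ dist (p i) S]

theorem tetragon_metrizability_necessity_general {A B C D : P}
    (hAD : A ≠ D) (hBD : B ≠ D) (hCD : C ≠ D) :
    sin (∠ B A D) * sin (∠ C B D) * sin (∠ A C D) =
      sin (∠ C A D) * sin (∠ A B D) * sin (∠ B C D) := by
  have vertices_ne : ∀ i, ![A, B, C] i ≠ D := by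
    simp [Fin.forall_fin_succ, hAD, hBD, hCD]
  have cyclic : sin (∠ B A D) * sin (∠ C B D) * sin (∠ A C D) =
      sin (∠ A B D) * sin (∠ B C D) * sin (∠ C A D) := by
    simpa [Fin.prod_univ_three] using prod_sin_angle_perm_swap (finRotate 3) ![A, B, C] vertices_ne
  rw [cyclic, ← mul_rotate]

end

theorem tetragon_metrizability_necessity
    {V : Type*} [NormedAddCommGroup V] [InnerProductSpace ℝ V]
    (A B C D : V)
    (h1 : ¬ Collinear ℝ ({A, B, C} : Set V))
    (h2 : ¬ Collinear ℝ ({A, B, D} : Set V))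
    (h3 : ¬ Collinear ℝ ({A, C, D} : Set V))
    (h4 : ¬ Collinear ℝ ({B, C, D} : Set V)) :
    Real.sin (∠ B A D) * Real.sin (∠ C B D) * Real.sin (∠ A C D) =
      Real.sin (∠ C A D) * Real.sin (∠ A B D) * Real.sin (∠ B C D) :=
  tetragon_metrizability_necessity_general
    (ne₁₃_of_not_collinear h2) (ne₂₃_of_not_collinear h2) (ne₂₃_of_not_collinear h3)
end

section
/- Let V be a real inner product space and let A, B, C, D, E, F ∈ V be six points no three of which are collinear (for every three of the six points, ¬ Collinear ℝ of that triple). Then sin(∠ E A F) · sin(∠ A B E) · sin(∠ A C B) · sin(∠ C D A) · sin(∠ C E D) · sin(∠ E F C) = sin(∠ C A D) · sin(∠ A B C) · sin(∠ E C F) · sin(∠ C D E) · sin(∠ A E B) · sin(∠ E F A). -/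
open Real EuclideanGeometry

/-! The six triangles `EFA`, `AEB`, `ABC`, `CAD`, `CDE`, `ECF` form a closed strip: each one shares
a side with the next. The law of sines expresses the ratio of these two sides as a ratio of sines of
angles, and going once around the strip the product of the side ratios telescopes to `1`.
When points coincide, some side lengths vanish. Going around the strip, the lengths switch from
nonzero to zero as often as they switch back. A switch in one direction makes a factor of one
product of sines vanish, and a switch in the other direction a factor of the other product. -/

theorem forall_perm_imp_iff_forall_imp_perm {ι : Type*} [Finite ι] (σ : Equiv.Perm ι)
    (p : ι → Prop) : (∀ i, p (σ i) → p i) ↔ ∀ i, p i → p (σ i) := by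
  rw [← σ.symm.forall_congr_right]
  simpa [Set.MapsTo] using Equiv.Perm.perm_symm_mapsTo_iff_mapsTo (f := σ) (s := {i | p i})

section Telescoping

variable {ι M : Type*} [Fintype ι] [CommMonoidWithZero M] [IsCancelMulZero M]
  {σ : Equiv.Perm ι} {s a b : ι → M}

theorem prod_eq_prod_of_mul_eq_mul_perm_of_ne_zero (hs : ∀ i, s i ≠ 0)
    (h : ∀ i, a i * s i = b i * s (σ i)) : ∏ i, a i = ∏ i, b i := by
  cases subsingleton_or_nontrivial M
  · exact Subsingleton.elim _ _
  have hprod : ∏ i, s i ≠ 0 := Finset.prod_ne_zero_iff.mpr fun i _ ↦ hs i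
  apply mul_right_cancel₀ hprod
  calc (∏ i, a i) * ∏ i, s i = ∏ i, b i * s (σ i) := by
        simp only [← Finset.prod_mul_distrib, h]
    _ = (∏ i, b i) * ∏ i, s i := by rw [Finset.prod_mul_distrib, Equiv.prod_comp σ s]

theorem prod_eq_prod_of_mul_eq_mul_perm (h : ∀ i, a i * s i = b i * s (σ i))
    (h₀ : ∀ i, s i = 0 → s (σ i) = 0 → a i = b i) : ∏ i, a i = ∏ i, b i := by
  have hstay_iff := forall_perm_imp_iff_forall_imp_perm σ (s · = 0)
  by_cases hstay : ∀ i, s i = 0 → s (σ i) = 0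
  · classical
    nontriviality M
    have hzero (i : ι) : s (σ i) = 0 ↔ s i = 0 := ⟨hstay_iff.mpr hstay i, hstay i⟩
    refine prod_eq_prod_of_mul_eq_mul_perm_of_ne_zero (σ := σ)
      (s := fun i ↦ if s i = 0 then 1 else s i) (fun i ↦ by split_ifs <;> simp [*]) fun i ↦ ?_
    by_cases hi : s i = 0
    · simp [hi, hstay i hi, h₀ i hi (hstay i hi)]
    · simp [hi, hzero, h]
  · obtain ⟨i, hi, hσi⟩ : ∃ i, s i = 0 ∧ s (σ i) ≠ 0 := by simpa using hstay
    obtain ⟨j, hσj, hj⟩ : ∃ j, s (σ j) = 0 ∧ s j ≠ 0 := by simpa using mt hstay_iff.mp hstay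
    have hb : b i = 0 := by simpa [hi, hσi] using (h i).symm
    have ha : a j = 0 := by simpa [hj, hσj] using h j
    rw [Finset.prod_eq_zero (Finset.mem_univ j) ha, Finset.prod_eq_zero (Finset.mem_univ i) hb]

end Telescoping

section Triangles

variable {V P : Type*} [NormedAddCommGroup V] [InnerProductSpace ℝ V] [MetricSpace P]
  [NormedAddTorsor V P]

theorem prod_sin_angle_eq_of_dist_eq_dist_perm {ι : Type*} [Fintype ι] (σ : Equiv.Perm ι)
    (x y z : ι → P) (h : ∀ i, dist (x i) (z i) = dist (x (σ i)) (y (σ i))) :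
    ∏ i, sin (∠ (x i) (y i) (z i)) = ∏ i, sin (∠ (x i) (z i) (y i)) := by
  refine prod_eq_prod_of_mul_eq_mul_perm (σ := σ) (s := fun i ↦ dist (x i) (y i))
    (fun i ↦ ?_) fun i hxy hxz ↦ ?_
  · rw [← h, angle_comm, dist_comm (x i) (y i)]
    exact law_sin (z i) (y i) (x i)
  · rw [← h] at hxz
    rw [← dist_eq_zero.mp hxy, ← dist_eq_zero.mp hxz]

theorem hexagon_identity_necessity_general (A B C D E F : P) :
    sin (∠ E A F) * sin (∠ A B E) * sin (∠ A C B) * sin (∠ C D A) * sin (∠ C E D) * sin (∠ E F C) =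
      sin (∠ C A D) * sin (∠ A B C) * sin (∠ E C F) * sin (∠ C D E) * sin (∠ A E B) *
        sin (∠ E F A) := by
  have hstrip := prod_sin_angle_eq_of_dist_eq_dist_perm (finRotate 6)
    ![E, A, A, C, C, E] ![F, E, B, A, D, C] ![A, B, C, D, E, F]
    (by simp [Fin.forall_fin_succ, dist_comm])
  simp only [Fin.prod_univ_six] at hstrip
  calc _ = sin (∠ E F A) * sin (∠ A E B) * sin (∠ A B C) * sin (∠ C A D) * sin (∠ C D E) *
        sin (∠ E C F) := hstrip.symm
    _ = _ := by ring

end Triangles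

theorem hexagon_identity_necessity
    {V : Type*} [NormedAddCommGroup V] [InnerProductSpace ℝ V]
    (A B C D E F : V)
    (hncol : ∀ X Y Z : V, X ∈ ({A, B, C, D, E, F} : Set V) →
      Y ∈ ({A, B, C, D, E, F} : Set V) → Z ∈ ({A, B, C, D, E, F} : Set V) →
      X ≠ Y → X ≠ Z → Y ≠ Z → ¬ Collinear ℝ ({X, Y, Z} : Set V)) :
    Real.sin (∠ E A F) * Real.sin (∠ A B E) * Real.sin (∠ A C B) *
        Real.sin (∠ C D A) * Real.sin (∠ C E D) * Real.sin (∠ E F C) =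
      Real.sin (∠ C A D) * Real.sin (∠ A B C) * Real.sin (∠ E C F) *
        Real.sin (∠ C D E) * Real.sin (∠ A E B) * Real.sin (∠ E F A) :=
  hexagon_identity_necessity_general A B C D E F
end

section
/- Let X = {A, B, C, D} be a set of four points carrying a betweenness relation B and an angle function ∠ making (X, B, ∠) a euclidean angle space, and suppose X is a tetragon (no three of the four points are collinear, i.e. B is empty). Then there exists a distance function d on X euclidean-compatible with ∠, unique up to multiplication by a positive constant, if and only if the four tetragon metrizability conditions hold: sin∠(D,B,A)·sin∠(B,C,A)·sin∠(C,D,A) = sin∠(C,B,A)·sin∠(D,C,A)·sin∠(B,D,A); sin∠(C,A,B)·sin∠(D,C,B)·sin∠(A,D,B) = sin∠(D,A,B)·sin∠(A,C,B)·sin∠(C,D,B); sin∠(B,A,C)·sin∠(D,B,C)·sin∠(A,D,C) = sin∠(D,A,C)·sin∠(A,B,C)·sin∠(B,D,C); sin∠(B,A,D)·sin∠(C,B,D)·sin∠(A,C,D) = sin∠(C,A,D)·sin∠(A,B,D)·sin∠(B,C,D). -/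
open Real EuclideanGeometry

/-- An angle space: a set `X` with a betweenness relation `btw` (axioms (B1)–(B4))
and an angle function `ang` (axioms (i)–(iii), the last being the First Axiom of
Collinearity). `btw A B C` means "`B` is between `A` and `C`"; `ang A B C` is the
angle at vertex `B`. -/
structure AngleSpace (X : Type*) where
  btw : X → X → X → Prop
  ang : X → X → X → ℝ
  /-- (B1) the three points of a betweenness triple are pairwise distinct -/
  btw_ne₁ : ∀ {A B C}, btw A B C → A ≠ B
  btw_ne₂ : ∀ {A B C}, btw A B C → B ≠ C
  btw_ne₃ : ∀ {A B C}, btw A B C → A ≠ C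
  /-- (B2) -/
  btw_symm : ∀ {A B C}, btw A B C → btw C B A
  /-- (B3) -/
  btw_asymm : ∀ {A B C}, btw A B C → ¬ btw B A C
  /-- (B4) Strong transitivity: if two betweenness triples share two points then any
  three distinct points among them are collinear. -/
  btw_strong_trans : ∀ {P₁ P₂ P₃ Q₁ Q₂ Q₃ : X}, btw P₁ P₂ P₃ → btw Q₁ Q₂ Q₃ →
    (∃ u v : X, u ≠ v ∧ u ∈ ({P₁, P₂, P₃} : Set X) ∧ u ∈ ({Q₁, Q₂, Q₃} : Set X) ∧
      v ∈ ({P₁, P₂, P₃} : Set X) ∧ v ∈ ({Q₁, Q₂, Q₃} : Set X)) →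
    ∀ x y z : X, x ∈ ({P₁, P₂, P₃, Q₁, Q₂, Q₃} : Set X) →
      y ∈ ({P₁, P₂, P₃, Q₁, Q₂, Q₃} : Set X) →
      z ∈ ({P₁, P₂, P₃, Q₁, Q₂, Q₃} : Set X) →
      x ≠ y → x ≠ z → y ≠ z → (btw y x z ∨ btw x y z ∨ btw x z y)
  /-- (i) symmetry of the angle function -/
  ang_symm : ∀ A B C, A ≠ B → B ≠ C → ang A B C = ang C B A
  /-- the angle function takes values in `[0, π]` -/
  ang_mem : ∀ A B C, A ≠ B → B ≠ C → ang A B C ∈ Set.Icc 0 π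
  /-- (ii) zero angles -/
  ang_eq_zero : ∀ A B C, A ≠ B → B ≠ C →
    (A = C ∨ btw B A C ∨ btw B C A) → ang A B C = 0
  /-- (ii) straight angles -/
  ang_eq_pi : ∀ A B C, btw A B C → ang A B C = π
  /-- (ii) positivity in the remaining cases -/
  ang_pos : ∀ A B C, A ≠ B → B ≠ C → ¬ (A = C ∨ btw B A C ∨ btw B C A) →
    ¬ btw A B C → 0 < ang A B C
  /-- (iii) First Axiom of Collinearity -/
  ang_first_collinearity : ∀ A B C D, btw B C D → A ≠ B → ang A B C = ang A B D

namespace AngleSpace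

variable {X : Type*} (S : AngleSpace X)

/-- Three points are collinear if one of them is between the other two. -/
def Collin (A B C : X) : Prop :=
  S.btw B A C ∨ S.btw A B C ∨ S.btw A C B

/-- No three distinct points of `s` are collinear. -/
def NoThreeCollinear (s : Set X) : Prop :=
  ∀ x y z : X, x ∈ s → y ∈ s → z ∈ s → x ≠ y → x ≠ z → y ≠ z → ¬ S.Collin x y z

/-- A distance function euclidean-compatible with the angle space: a metric whose
metric betweenness coincides with `btw` and which satisfies the law of cosines with
respect to `ang`. -/
def EuclideanCompatible (d : X → X → ℝ) : Prop :=
  (∀ x y, 0 ≤ d x y) ∧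
  (∀ x y, d x y = d y x) ∧
  (∀ x y, d x y = 0 ↔ x = y) ∧
  (∀ x y z, d x z ≤ d x y + d y z) ∧
  (∀ A B C, S.btw A B C ↔ (A ≠ B ∧ B ≠ C ∧ A ≠ C ∧ d A B + d B C = d A C)) ∧
  (∀ A B C, A ≠ B → A ≠ C →
    d B C ^ 2 = d A B ^ 2 + d A C ^ 2 - 2 * d A B * d A C * Real.cos (S.ang B A C))

/-- (A) the angle space is euclidean: the angles of every trigon sum to `π`. -/
def IsEuclidean : Prop :=
  ∀ A B C : X, A ≠ B → A ≠ C → B ≠ C →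
    S.ang A B C + S.ang B C A + S.ang C A B = π

/-- (B) the Second Axiom of Collinearity. -/
def SecondAxiom : Prop :=
  ∀ A B C D : X, A ≠ B → A ≠ C → A ≠ D → B ≠ C → B ≠ D → C ≠ D →
    S.btw A B C →
    ¬ S.Collin A B D → ¬ S.Collin A C D → ¬ S.Collin B C D →
    S.ang A D C = S.ang A D B + S.ang B D C ∧ S.ang A B D + S.ang C B D = π

/-- (C) the tetragon metrizability condition. -/
def TetragonCond : Prop :=
  ∀ A B C D : X, A ≠ B → A ≠ C → A ≠ D → B ≠ C → B ≠ D → C ≠ D →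
    S.NoThreeCollinear {A, B, C, D} →
    (Real.sin (S.ang D B A) * Real.sin (S.ang B C A) * Real.sin (S.ang C D A) =
      Real.sin (S.ang C B A) * Real.sin (S.ang D C A) * Real.sin (S.ang B D A)) ∧
    (Real.sin (S.ang C A B) * Real.sin (S.ang D C B) * Real.sin (S.ang A D B) =
      Real.sin (S.ang D A B) * Real.sin (S.ang A C B) * Real.sin (S.ang C D B)) ∧
    (Real.sin (S.ang B A C) * Real.sin (S.ang D B C) * Real.sin (S.ang A D C) =
      Real.sin (S.ang D A C) * Real.sin (S.ang A B C) * Real.sin (S.ang B D C)) ∧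
    (Real.sin (S.ang B A D) * Real.sin (S.ang C B D) * Real.sin (S.ang A C D) =
      Real.sin (S.ang C A D) * Real.sin (S.ang A B D) * Real.sin (S.ang B C D))

/-- (D) the Global Compatibility Condition: the pentagon and hexagon identities. -/
def GlobalCompat : Prop :=
  (∀ A B C D E : X, A ≠ B → A ≠ C → A ≠ D → A ≠ E → B ≠ C → B ≠ D → B ≠ E →
    C ≠ D → C ≠ E → D ≠ E →
    S.NoThreeCollinear {A, B, C, D, E} →
    Real.sin (S.ang D A E) * Real.sin (S.ang A B D) * Real.sin (S.ang A C B) *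
        Real.sin (S.ang A D C) * Real.sin (S.ang C E D) =
      Real.sin (S.ang C A D) * Real.sin (S.ang A B C) * Real.sin (S.ang D C E) *
        Real.sin (S.ang A D B) * Real.sin (S.ang A E D)) ∧
  (∀ A B C D E F : X, A ≠ B → A ≠ C → A ≠ D → A ≠ E → A ≠ F → B ≠ C → B ≠ D →
    B ≠ E → B ≠ F → C ≠ D → C ≠ E → C ≠ F → D ≠ E → D ≠ F → E ≠ F →
    S.NoThreeCollinear {A, B, C, D, E, F} →
    Real.sin (S.ang E A F) * Real.sin (S.ang A B E) * Real.sin (S.ang A C B) *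
        Real.sin (S.ang C D A) * Real.sin (S.ang C E D) * Real.sin (S.ang E F C) =
      Real.sin (S.ang C A D) * Real.sin (S.ang A B C) * Real.sin (S.ang E C F) *
        Real.sin (S.ang C D E) * Real.sin (S.ang A E B) * Real.sin (S.ang E F A))

end AngleSpace

/-!
On a set without collinear triples, the law of cosines is equivalent to the law of sines. The law of
sines in one trigon determines the ratios of its sides, so a distance `d` is determined by a single
value `d p u`: first `d p x` is read off in the trigon `p u x`, then `d x y` in the trigon `p x y`.
The tetragon identity at a vertex `a` says that the ratios obtained by passing from the side `ab`
to `ac`, then to `ad` and back to `ab` multiply to `1`. At the vertex `p` this is the law of sines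
for the trigons `p x y`, at the other vertices it is the law of sines for the trigons avoiding `p`.
-/

theorem mul_sin_eq_mul_sin_of_law_cos {p q r β γ : ℝ} (hp : p ≠ 0) (hβ : 0 ≤ r * sin β)
    (hγ : 0 ≤ q * sin γ) (hq : q ^ 2 = r ^ 2 + p ^ 2 - 2 * r * p * cos β)
    (hr : r ^ 2 = q ^ 2 + p ^ 2 - 2 * q * p * cos γ) : r * sin β = q * sin γ := by
  have hproj : p = r * cos β + q * cos γ := mul_left_cancel₀ hp (by linarith)
  refine (sq_eq_sq₀ hβ hγ).1 ?_
  linear_combination r ^ 2 * sin_sq_add_cos_sq β - q ^ 2 * sin_sq_add_cos_sq γ - hq -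
    (p - r * cos β + q * cos γ) * hproj

theorem eq_mul_cos_add_mul_cos_of_law_sin {p q r α β γ : ℝ} (hsum : α + β + γ = π)
    (hβ : sin β ≠ 0) (hqr : r * sin β = q * sin γ) (hpq : q * sin α = p * sin β) :
    p = r * cos β + q * cos γ := by
  have hα : sin α = sin β * cos γ + cos β * sin γ := by
    rw [← sin_add, ← sin_pi_sub, ← hsum]
    ring_nf
  refine mul_right_cancel₀ hβ ?_
  linear_combination -hpq + q * hα - cos β * hqr

namespace AngleSpace

variable {X : Type*} {S : AngleSpace X} {d d' : X → X → ℝ} {p x y z : X}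

/-- A trigon: three distinct points that are not collinear. -/
structure IsTrigon (S : AngleSpace X) (x y z : X) : Prop where
  ne₁₂ : x ≠ y
  ne₁₃ : x ≠ z
  ne₂₃ : y ≠ z
  not_collin : ¬ S.Collin x y z

namespace IsTrigon

theorem of_forall_not_btw (htet : ∀ x y z, ¬ S.btw x y z) (hxy : x ≠ y) (hxz : x ≠ z)
    (hyz : y ≠ z) : S.IsTrigon x y z :=
  ⟨hxy, hxz, hyz, by simp [Collin, htet]⟩

theorem swap_left (h : S.IsTrigon x y z) : S.IsTrigon y x z :=
  ⟨h.ne₁₂.symm, h.ne₂₃, h.ne₁₃, fun hc => h.not_collin <| by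
    rcases hc with hc | hc | hc
    exacts [.inr (.inl hc), .inl hc, .inr (.inr (S.btw_symm hc))]⟩

theorem swap_right (h : S.IsTrigon x y z) : S.IsTrigon x z y :=
  ⟨h.ne₁₃, h.ne₁₂, h.ne₂₃.symm, fun hc => h.not_collin <| by
    rcases hc with hc | hc | hc
    exacts [.inl (S.btw_symm hc), .inr (.inr hc), .inr (.inl hc)]⟩

theorem rotate (h : S.IsTrigon x y z) : S.IsTrigon y z x :=
  h.swap_left.swap_right

theorem ang_comm (h : S.IsTrigon x y z) : S.ang x y z = S.ang z y x :=
  S.ang_symm x y z h.ne₁₂ h.ne₂₃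

theorem ang_pos (h : S.IsTrigon x y z) : 0 < S.ang x y z := by
  have hc := h.not_collin
  have hbtw : ¬ S.btw y z x := fun hb => hc (.inr (.inr (S.btw_symm hb)))
  simp only [Collin, not_or] at hc
  exact S.ang_pos x y z h.ne₁₂ h.ne₂₃ (by simp [h.ne₁₃, hc, hbtw]) hc.2.1

theorem sin_ang_pos (hE : S.IsEuclidean) (h : S.IsTrigon x y z) : 0 < sin (S.ang x y z) := by
  have hsum := hE x y z h.ne₁₂ h.ne₁₃ h.ne₂₃
  exact sin_pos_of_pos_of_lt_pi h.ang_pos (by linarith [h.rotate.ang_pos, h.rotate.rotate.ang_pos])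

theorem cos_ang_lt_one (hE : S.IsEuclidean) (h : S.IsTrigon x y z) : cos (S.ang x y z) < 1 :=
  (cos_le_one _).lt_of_ne fun hcos =>
    (h.sin_ang_pos hE).ne' (sin_eq_zero_iff_cos_eq.2 (.inl hcos))

end IsTrigon

theorem sin_ang_nonneg (hxy : x ≠ y) (hyz : y ≠ z) : 0 ≤ sin (S.ang x y z) :=
  have hmem := S.ang_mem x y z hxy hyz
  sin_nonneg_of_nonneg_of_le_pi hmem.1 hmem.2

/-- A symmetric function that is zero exactly on the diagonal, positive elsewhere, and satisfies the
law of sines. The triangle inequality is not required: without collinear triples it follows. -/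
structure IsSineDist (S : AngleSpace X) (d : X → X → ℝ) : Prop where
  self : ∀ x, d x x = 0
  comm : ∀ x y, d x y = d y x
  pos : ∀ {x y}, x ≠ y → 0 < d x y
  law_sin : ∀ {x y z}, x ≠ y → x ≠ z → d x y * sin (S.ang z y x) = d x z * sin (S.ang y z x)

theorem EuclideanCompatible.isSineDist (hd : S.EuclideanCompatible d) : S.IsSineDist d := by
  obtain ⟨hnonneg, hcomm, hzero, -, -, hcos⟩ := hd
  have hpos {x y : X} (hxy : x ≠ y) : 0 < d x y :=
    (hnonneg x y).lt_of_ne fun h => hxy ((hzero x y).1 h.symm)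
  refine ⟨fun x => (hzero x x).2 rfl, hcomm, hpos, fun {x y z} hxy hxz => ?_⟩
  rcases eq_or_ne y z with rfl | hyz
  · rfl
  have hy := hcos y z x hyz hxy.symm
  have hz := hcos z y x hyz.symm hxz.symm
  rw [hcomm y x, hcomm z x] at hy hz
  rw [hcomm z y] at hz
  exact mul_sin_eq_mul_sin_of_law_cos (hpos hyz).ne'
    (mul_nonneg (hnonneg x y) (sin_ang_nonneg hyz.symm hxy.symm))
    (mul_nonneg (hnonneg x z) (sin_ang_nonneg hyz hxz.symm))
    (by linarith) (by linarith)

namespace IsSineDist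

theorem dist_eq_mul_cos_add_mul_cos (hE : S.IsEuclidean) (hd : S.IsSineDist d)
    (h : S.IsTrigon x y z) :
    d y z = d x y * cos (S.ang x y z) + d x z * cos (S.ang y z x) := by
  have hsin := h.sin_ang_pos hE
  have hx := hd.law_sin h.ne₁₂ h.ne₁₃
  have hz := hd.law_sin h.ne₁₃.symm h.ne₂₃.symm
  rw [← h.ang_comm] at hx
  rw [← h.rotate.rotate.ang_comm, hd.comm z x, hd.comm z y] at hz
  refine eq_mul_cos_add_mul_cos_of_law_sin (α := S.ang z x y) ?_ hsin.ne' hx hz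
  linarith [hE x y z h.ne₁₂ h.ne₁₃ h.ne₂₃]

theorem law_cos (hE : S.IsEuclidean) (hd : S.IsSineDist d) (h : S.IsTrigon x y z) :
    d y z ^ 2 = d x y ^ 2 + d x z ^ 2 - 2 * d x y * d x z * cos (S.ang y x z) := by
  have hyz := hd.dist_eq_mul_cos_add_mul_cos hE h
  have hzx := hd.dist_eq_mul_cos_add_mul_cos hE h.rotate
  have hxy := hd.dist_eq_mul_cos_add_mul_cos hE h.rotate.rotate
  rw [hd.comm z x, hd.comm y x] at hzx
  rw [hd.comm z x, hd.comm z y] at hxy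
  rw [h.swap_left.ang_comm]
  linear_combination d y z * hyz - d x z * hzx - d x y * hxy

theorem dist_lt_add (hE : S.IsEuclidean) (hd : S.IsSineDist d) (h : S.IsTrigon x y z) :
    d x z < d x y + d y z := by
  have hxz := hd.dist_eq_mul_cos_add_mul_cos hE h.swap_left
  rw [hd.comm y x] at hxz
  calc d x z = d x y * cos (S.ang y x z) + d y z * cos (S.ang x z y) := hxz
    _ < d x y * 1 + d y z * 1 := add_lt_add
        (mul_lt_mul_of_pos_left (h.swap_left.cos_ang_lt_one hE) (hd.pos h.ne₁₂))
        (mul_lt_mul_of_pos_left (h.swap_right.cos_ang_lt_one hE) (hd.pos h.ne₂₃))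
    _ = d x y + d y z := by ring

theorem euclideanCompatible (htet : ∀ x y z, ¬ S.btw x y z) (hE : S.IsEuclidean)
    (hd : S.IsSineDist d) : S.EuclideanCompatible d := by
  have hnonneg (x y : X) : 0 ≤ d x y := by
    rcases eq_or_ne x y with rfl | hxy
    exacts [(hd.self x).ge, (hd.pos hxy).le]
  have hlt {x y z : X} (hxy : x ≠ y) (hyz : y ≠ z) (hxz : x ≠ z) : d x z < d x y + d y z :=
    hd.dist_lt_add hE (.of_forall_not_btw htet hxy hxz hyz)
  refine ⟨hnonneg, hd.comm, fun x y => ⟨?_, ?_⟩, fun x y z => ?_, fun x y z => ?_,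
    fun x y z hxy hxz => ?_⟩
  · exact fun h => by_contra fun hxy => (hd.pos hxy).ne' h
  · rintro rfl
    exact hd.self x
  · rcases eq_or_ne x y with rfl | hxy
    · simp [hd.self]
    rcases eq_or_ne y z with rfl | hyz
    · simp [hd.self]
    rcases eq_or_ne x z with rfl | hxz
    · simpa [hd.self] using add_nonneg (hnonneg x y) (hnonneg y x)
    · exact (hlt hxy hyz hxz).le
  · exact iff_of_false (htet x y z) fun ⟨hxy, hyz, hxz, h⟩ => (hlt hxy hyz hxz).ne' h
  · rcases eq_or_ne y z with rfl | hyz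
    · rw [hd.self, S.ang_eq_zero y x y hxy.symm hxz (.inl rfl), cos_zero]
      ring
    · exact hd.law_cos hE (.of_forall_not_btw htet hxy hxz hyz)

theorem eq_mul_of_eq_mul (hE : S.IsEuclidean) (hd : S.IsSineDist d) (hd' : S.IsSineDist d')
    (h : S.IsTrigon x y z) {t : ℝ} (hxy : d' x y = t * d x y) : d' x z = t * d x z := by
  refine mul_right_cancel₀ (h.rotate.sin_ang_pos hE).ne' ?_
  rw [← hd'.law_sin h.ne₁₂ h.ne₁₃, hxy, mul_assoc, mul_assoc, hd.law_sin h.ne₁₂ h.ne₁₃]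

theorem exists_eq_mul (htet : ∀ x y z, ¬ S.btw x y z) (hE : S.IsEuclidean)
    (hd : S.IsSineDist d) (hd' : S.IsSineDist d') :
    ∃ t : ℝ, 0 < t ∧ ∀ x y, d' x y = t * d x y := by
  have hself (t : ℝ) (x : X) : d' x x = t * d x x := by simp [hd.self, hd'.self]
  rcases subsingleton_or_nontrivial X with _ | _
  · exact ⟨1, one_pos, fun x y => Subsingleton.elim x y ▸ hself 1 x⟩
  obtain ⟨p, u, hpu⟩ := exists_pair_ne X
  refine ⟨d' p u / d p u, div_pos (hd'.pos hpu) (hd.pos hpu), ?_⟩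
  set t := d' p u / d p u
  have hu : d' p u = t * d p u := (div_mul_cancel₀ _ (hd.pos hpu).ne').symm
  have hp (x : X) : d' p x = t * d p x := by
    rcases eq_or_ne p x with rfl | hpx
    · exact hself t p
    rcases eq_or_ne u x with rfl | hux
    · exact hu
    · exact hd.eq_mul_of_eq_mul hE hd' (.of_forall_not_btw htet hpu hpx hux) hu
  intro x y
  have hx : d' x p = t * d x p := by rw [hd'.comm, hd.comm, hp]
  rcases eq_or_ne x y with rfl | hxy
  · exact hself t x
  rcases eq_or_ne x p with rfl | hxp
  · exact hp y
  rcases eq_or_ne p y with rfl | hpy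
  · exact hx
  · exact hd.eq_mul_of_eq_mul hE hd' (.of_forall_not_btw htet hxp hxy hpy) hx

end IsSineDist

/-- The tetragon identity at the vertex `a`, the first line of `TetragonCond`; the other three lines
are the identities at the other vertices. -/
def VertexIdentity (S : AngleSpace X) (a b c d : X) : Prop :=
  sin (S.ang d b a) * sin (S.ang b c a) * sin (S.ang c d a) =
    sin (S.ang c b a) * sin (S.ang d c a) * sin (S.ang b d a)

theorem tetragonCond_iff_forall_vertexIdentity (htet : ∀ x y z, ¬ S.btw x y z) :
    S.TetragonCond ↔ ∀ a b c d, a ≠ b → a ≠ c → a ≠ d → S.VertexIdentity a b c d := by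
  constructor
  · intro h a b c d hab hac had
    by_cases hdist : b ≠ c ∧ b ≠ d ∧ c ≠ d
    · exact (h a b c d hab hac had hdist.1 hdist.2.1 hdist.2.2
        fun _ _ _ _ _ _ _ _ _ => by simp [Collin, htet]).1
    -- When two of `b`, `c`, `d` coincide, both sides are the same product.
    · grind [VertexIdentity]
  · intro h a b c d hab hac had hbc hbd hcd _
    have hb := h b c a d hbc hab.symm hbd
    have hc := h c b a d hbc.symm hac.symm hcd
    have hd := h d b a c hbd.symm had.symm hcd.symm
    unfold VertexIdentity at hb hc hd
    exact ⟨h a b c d hab hac had, by linarith, by linarith, by linarith⟩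

theorem VertexIdentity.of_forall_eq {a b c d : X} (h : S.VertexIdentity a b c d)
    (hcover : ∀ x, x = a ∨ x = b ∨ x = c ∨ x = d) {b' c' d' : X} (hb : a ≠ b') (hc : a ≠ c')
    (hd : a ≠ d') : S.VertexIdentity a b' c' d' := by
  have hb' := (hcover b').resolve_left hb.symm
  have hc' := (hcover c').resolve_left hc.symm
  have hd' := (hcover d').resolve_left hd.symm
  unfold VertexIdentity at h ⊢
  -- Transposing two of `b`, `c`, `d` swaps the two sides; they agree if two points coincide.
  rcases hb' with rfl | rfl | rfl <;> rcases hc' with rfl | rfl | rfl <;>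
    rcases hd' with rfl | rfl | rfl <;> linarith

theorem tetragonCond_iff_of_forall_eq {A B C D : X} (htet : ∀ x y z, ¬ S.btw x y z)
    (hAB : A ≠ B) (hAC : A ≠ C) (hAD : A ≠ D) (hBC : B ≠ C) (hBD : B ≠ D) (hCD : C ≠ D)
    (hcover : ∀ x, x = A ∨ x = B ∨ x = C ∨ x = D) :
    S.TetragonCond ↔ S.VertexIdentity A B C D ∧ S.VertexIdentity B C A D ∧
      S.VertexIdentity C B A D ∧ S.VertexIdentity D B A C := by
  rw [tetragonCond_iff_forall_vertexIdentity htet]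
  refine ⟨fun h => ⟨h A B C D hAB hAC hAD, h B C A D hBC hAB.symm hBD,
    h C B A D hBC.symm hAC.symm hCD, h D B A C hBD.symm hAD.symm hCD.symm⟩, ?_⟩
  rintro ⟨hA, hB, hC, hD⟩ a b c d
  rcases hcover a with rfl | rfl | rfl | rfl
  · exact hA.of_forall_eq hcover
  · exact hB.of_forall_eq (fun x => by grind [hcover x])
  · exact hC.of_forall_eq (fun x => by grind [hcover x])
  · exact hD.of_forall_eq (fun x => by grind [hcover x])

theorem IsSineDist.vertexIdentity {a b c e : X} (hd : S.IsSineDist d) (hab : a ≠ b) (hac : a ≠ c)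
    (hae : a ≠ e) : S.VertexIdentity a b c e := by
  have hne : d a b * d a c * d a e ≠ 0 :=
    (mul_pos (mul_pos (hd.pos hab) (hd.pos hac)) (hd.pos hae)).ne'
  refine mul_left_cancel₀ hne ?_
  calc d a b * d a c * d a e * (sin (S.ang e b a) * sin (S.ang b c a) * sin (S.ang c e a))
      = (d a b * sin (S.ang e b a)) * (d a c * sin (S.ang b c a)) *
          (d a e * sin (S.ang c e a)) := by ring
    _ = (d a e * sin (S.ang b e a)) * (d a b * sin (S.ang c b a)) *
          (d a c * sin (S.ang e c a)) := by
        rw [hd.law_sin hab hae, hd.law_sin hac hab, hd.law_sin hae hac]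
    _ = d a b * d a c * d a e * (sin (S.ang c b a) * sin (S.ang e c a) * sin (S.ang b e a)) := by
        ring

theorem exists_radius_law_sin (htet : ∀ x y z, ¬ S.btw x y z) (hE : S.IsEuclidean)
    {p u : X} (hpu : p ≠ u) (hvert : ∀ x y, p ≠ x → p ≠ y → S.VertexIdentity p u x y) :
    ∃ ρ : X → ℝ, ρ p = 0 ∧ (∀ x, p ≠ x → 0 < ρ x) ∧
      ∀ x y, p ≠ x → p ≠ y → ρ x * sin (S.ang y x p) = ρ y * sin (S.ang x y p) := by
  classical
  have hsin {x y : X} (hpx : p ≠ x) (hpy : p ≠ y) (hxy : x ≠ y) : 0 < sin (S.ang x y p) :=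
    (IsTrigon.of_forall_not_btw htet hxy hpx.symm hpy.symm).sin_ang_pos hE
  refine ⟨fun x => if x = p then 0 else if x = u then 1 else
    sin (S.ang x u p) / sin (S.ang u x p), if_pos rfl, fun x hpx => ?_, fun x y hpx hpy => ?_⟩
  · rcases eq_or_ne u x with rfl | hux
    · simp [hpx.symm]
    · simpa [hpx.symm, hux.symm] using div_pos (hsin hpx hpu hux.symm) (hsin hpu hpx hux)
  · rcases eq_or_ne x y with rfl | hxy
    · rfl
    rcases eq_or_ne u x with rfl | hux
    · simp [hpx.symm, hpy.symm, hxy.symm, (hsin hpx hpy hxy).ne']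
    rcases eq_or_ne u y with rfl | huy
    · simp [hpx.symm, hpy.symm, hxy, (hsin hpy hpx hxy.symm).ne']
    · have hx := (hsin hpu hpx hux).ne'
      have hy := (hsin hpu hpy huy).ne'
      have hu := hvert x y hpx hpy
      unfold VertexIdentity at hu
      simp only [hpx.symm, hpy.symm, hux.symm, huy.symm, if_false]
      field_simp
      linarith

open Classical in
/-- The candidate distance with given distances `ρ` from the point `p`: off `p`, the value at `x y`
is what the law of sines in the trigon `x p y` prescribes. -/
noncomputable def radialDist (S : AngleSpace X) (p : X) (ρ : X → ℝ) (x y : X) : ℝ :=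
  if x = p then ρ y else if y = p then ρ x
  else ρ x * (sin (S.ang y p x) / sin (S.ang p y x))

section radialDist

variable {ρ : X → ℝ}

theorem radialDist_left : S.radialDist p ρ p x = ρ x :=
  if_pos rfl

theorem radialDist_right (hzero : ρ p = 0) : S.radialDist p ρ x p = ρ x := by
  rcases eq_or_ne x p with rfl | hx
  · simp [radialDist]
  · simp [radialDist, hx]

theorem radialDist_of_ne (hx : x ≠ p) (hy : y ≠ p) :
    S.radialDist p ρ x y = ρ x * (sin (S.ang y p x) / sin (S.ang p y x)) := by
  simp [radialDist, hx, hy]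

theorem radialDist_self (hzero : ρ p = 0) : S.radialDist p ρ x x = 0 := by
  rcases eq_or_ne x p with rfl | hx
  · rw [radialDist_left, hzero]
  · rw [radialDist_of_ne hx hx, S.ang_eq_zero x p x hx hx.symm (.inl rfl), sin_zero, zero_div,
      mul_zero]

theorem radialDist_comm (htet : ∀ x y z, ¬ S.btw x y z) (hE : S.IsEuclidean) (hzero : ρ p = 0)
    (hρ : ∀ x y, p ≠ x → p ≠ y → ρ x * sin (S.ang y x p) = ρ y * sin (S.ang x y p)) :
    S.radialDist p ρ x y = S.radialDist p ρ y x := by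
  rcases eq_or_ne x p with rfl | hx
  · rw [radialDist_left, radialDist_right hzero]
  rcases eq_or_ne y p with rfl | hy
  · rw [radialDist_left, radialDist_right hzero]
  rcases eq_or_ne x y with rfl | hxy
  · rfl
  have h : S.IsTrigon x y p := .of_forall_not_btw htet hxy hx hy
  have hsx := (h.swap_left.sin_ang_pos hE).ne'
  have hsy := (h.sin_ang_pos hE).ne'
  have hρxy := hρ x y hx.symm hy.symm
  rw [radialDist_of_ne hx hy, radialDist_of_ne hy hx, ← h.ang_comm, ← h.swap_left.ang_comm,
    h.rotate.ang_comm]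
  field_simp
  linear_combination sin (S.ang x p y) * hρxy

theorem radialDist_pos (htet : ∀ x y z, ¬ S.btw x y z) (hE : S.IsEuclidean)
    (hpos : ∀ x, p ≠ x → 0 < ρ x) (hxy : x ≠ y) : 0 < S.radialDist p ρ x y := by
  rcases eq_or_ne x p with rfl | hx
  · rw [radialDist_left]
    exact hpos y hxy
  rcases eq_or_ne y p with rfl | hy
  · simpa [radialDist, hx] using hpos x hx.symm
  have h : S.IsTrigon p y x := .of_forall_not_btw htet hy.symm hx.symm hxy.symm
  rw [radialDist_of_ne hx hy]
  exact mul_pos (hpos x hx.symm) (div_pos (h.swap_left.sin_ang_pos hE) (h.sin_ang_pos hE))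

theorem radialDist_law_sin (htet : ∀ x y z, ¬ S.btw x y z) (hE : S.IsEuclidean)
    (hzero : ρ p = 0)
    (hρ : ∀ x y, p ≠ x → p ≠ y → ρ x * sin (S.ang y x p) = ρ y * sin (S.ang x y p))
    (hvert : ∀ y z, x ≠ p → x ≠ y → x ≠ z → S.VertexIdentity x p y z) (hxy : x ≠ y)
    (hxz : x ≠ z) :
    S.radialDist p ρ x y * sin (S.ang z y x) = S.radialDist p ρ x z * sin (S.ang y z x) := by
  have hsin {y : X} (hx : x ≠ p) (hy : y ≠ p) (hxy : x ≠ y) : sin (S.ang p y x) ≠ 0 :=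
    ((IsTrigon.of_forall_not_btw htet hy.symm hx.symm hxy.symm).sin_ang_pos hE).ne'
  rcases eq_or_ne x p with rfl | hx
  · simpa only [radialDist_left] using hρ y z hxy hxz
  rcases eq_or_ne y p with rfl | hy
  · rcases eq_or_ne z y with rfl | hz
    · rfl
    · rw [radialDist_right hzero, radialDist_of_ne hx hz, mul_assoc,
        div_mul_cancel₀ _ (hsin hx hz hxz)]
  rcases eq_or_ne z p with rfl | hz
  · rw [radialDist_right hzero, radialDist_of_ne hx hy, mul_assoc,
      div_mul_cancel₀ _ (hsin hx hy hxy)]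
  · have hsy := hsin hx hy hxy
    have hsz := hsin hx hz hxz
    have hvx := hvert y z hx hxy hxz
    unfold VertexIdentity at hvx
    rw [radialDist_of_ne hx hy, radialDist_of_ne hx hz]
    field_simp
    linear_combination -ρ x * hvx

end radialDist

theorem exists_isSineDist (htet : ∀ x y z, ¬ S.btw x y z) (hE : S.IsEuclidean)
    (hvert : ∀ a b c d, a ≠ b → a ≠ c → a ≠ d → S.VertexIdentity a b c d) :
    ∃ d, S.IsSineDist d := by
  rcases subsingleton_or_nontrivial X with _ | _
  · exact ⟨0, fun _ => rfl, fun _ _ => rfl, fun h => (h (Subsingleton.elim _ _)).elim,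
      fun h _ => (h (Subsingleton.elim _ _)).elim⟩
  obtain ⟨p, u, hpu⟩ := exists_pair_ne X
  obtain ⟨ρ, hzero, hpos, hρ⟩ := exists_radius_law_sin htet hE hpu fun x y => hvert p u x y hpu
  exact ⟨S.radialDist p ρ, fun _ => radialDist_self hzero,
    fun _ _ => radialDist_comm htet hE hzero hρ, radialDist_pos htet hE hpos,
    radialDist_law_sin htet hE hzero hρ fun y z => hvert _ p y z⟩

end AngleSpace

theorem tetragon_metrizability_general {X : Type*} (S : AngleSpace X)
    (htetragon : ∀ x y z : X, ¬ S.btw x y z) (heuclidean : S.IsEuclidean) :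
    (∃ d : X → X → ℝ, S.EuclideanCompatible d ∧
      ∀ d' : X → X → ℝ, S.EuclideanCompatible d' →
        ∃ t : ℝ, 0 < t ∧ ∀ x y : X, d' x y = t * d x y) ↔ S.TetragonCond := by
  rw [AngleSpace.tetragonCond_iff_forall_vertexIdentity htetragon]
  constructor
  · rintro ⟨d, hd, -⟩ a b c e hab hac hae
    exact hd.isSineDist.vertexIdentity hab hac hae
  · intro hvert
    obtain ⟨d, hd⟩ := AngleSpace.exists_isSineDist htetragon heuclidean hvert
    exact ⟨d, hd.euclideanCompatible htetragon heuclidean, fun d' hd' =>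
      hd.exists_eq_mul htetragon heuclidean hd'.isSineDist⟩

/-- Proposition 5.2: metrizability condition for tetragons. -/
theorem tetragon_metrizability
    {X : Type*} (S : AngleSpace X) (A B C D : X)
    (hAB : A ≠ B) (hAC : A ≠ C) (hAD : A ≠ D) (hBC : B ≠ C) (hBD : B ≠ D)
    (hCD : C ≠ D)
    (hcover : ∀ x : X, x = A ∨ x = B ∨ x = C ∨ x = D)
    (htetragon : ∀ x y z : X, ¬ S.btw x y z)
    (heuclidean : S.IsEuclidean) :
    (∃ d : X → X → ℝ, S.EuclideanCompatible d ∧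
      ∀ d' : X → X → ℝ, S.EuclideanCompatible d' →
        ∃ t : ℝ, 0 < t ∧ ∀ x y : X, d' x y = t * d x y)
    ↔
    ((Real.sin (S.ang D B A) * Real.sin (S.ang B C A) * Real.sin (S.ang C D A) =
        Real.sin (S.ang C B A) * Real.sin (S.ang D C A) * Real.sin (S.ang B D A)) ∧
      (Real.sin (S.ang C A B) * Real.sin (S.ang D C B) * Real.sin (S.ang A D B) =
        Real.sin (S.ang D A B) * Real.sin (S.ang A C B) * Real.sin (S.ang C D B)) ∧
      (Real.sin (S.ang B A C) * Real.sin (S.ang D B C) * Real.sin (S.ang A D C) =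
        Real.sin (S.ang D A C) * Real.sin (S.ang A B C) * Real.sin (S.ang B D C)) ∧
      (Real.sin (S.ang B A D) * Real.sin (S.ang C B D) * Real.sin (S.ang A C D) =
        Real.sin (S.ang C A D) * Real.sin (S.ang A B D) * Real.sin (S.ang B C D))) :=
  (tetragon_metrizability_general S htetragon heuclidean).trans <|
    (AngleSpace.tetragonCond_iff_of_forall_eq htetragon hAB hAC hAD hBC hBD hCD hcover).trans <| by
      simp only [AngleSpace.VertexIdentity, mul_comm]
end

section
/- Let V be a real inner product space, let k ≥ 1, and let X₀, X₁, …, X_k ∈ V with Xᵢ ≠ X₀ for all 1 ≤ i ≤ k. Then the determinant of the k×k matrix with entries cos(∠ Xᵢ X₀ Xⱼ) (1 ≤ i, j ≤ k) is nonnegative. -/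
open Real EuclideanGeometry

section

open InnerProductGeometry Matrix NormedSpace RealInnerProductSpace

variable {V : Type*} [NormedAddCommGroup V] [InnerProductSpace ℝ V]

lemma cos_angle_eq_inner_normalize {x y : V} (hx : x ≠ 0) (hy : y ≠ 0) :
    cos (InnerProductGeometry.angle x y) = ⟪normalize x, normalize y⟫ := by
  rw [← angle_normalize_left, ← angle_normalize_right,
    inner_eq_cos_angle_of_norm_eq_one (norm_normalize hx) (norm_normalize hy)]

variable {ι P : Type*} [MetricSpace P] [NormedAddTorsor V P]

lemma of_cos_angle_eq_gram_normalize (p₀ : P) (p : ι → P) (hp : ∀ i, p i ≠ p₀) :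
    of (fun i j => cos (∠ (p i) p₀ (p j))) = gram ℝ fun i => normalize (p i -ᵥ p₀ : V) := by
  ext i j
  exact cos_angle_eq_inner_normalize (vsub_ne_zero.mpr (hp i)) (vsub_ne_zero.mpr (hp j))

theorem cos_matrix_det_nonneg_general [Finite ι] (p₀ : P) (p : ι → P) (hp : ∀ i, p i ≠ p₀) :
    (of fun i j => cos (∠ (p i) p₀ (p j))).PosSemidef := by
  rw [of_cos_angle_eq_gram_normalize p₀ p hp]
  exact posSemidef_gram ℝ _

end

theorem cos_matrix_det_nonneg
    {V : Type*} [NormedAddCommGroup V] [InnerProductSpace ℝ V]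
    (k : ℕ) (hk : 1 ≤ k) (X : Fin (k + 1) → V)
    (hX : ∀ i : Fin k, X i.succ ≠ X 0) :
    0 ≤ Matrix.det (fun i j : Fin k => Real.cos (∠ (X i.succ) (X 0) (X j.succ))) :=
  (cos_matrix_det_nonneg_general (X 0) (fun i : Fin k => X i.succ) hX).det_nonneg
end

section
/- Let n ≥ 1 and let X₀, X₁, …, X_{n+1} be n + 2 points of EuclideanSpace ℝ (Fin n) with Xᵢ ≠ X₀ for all 1 ≤ i ≤ n+1. Then the determinant of the (n+1)×(n+1) matrix with entries cos(∠ Xᵢ X₀ Xⱼ) (1 ≤ i, j ≤ n+1) is zero. -/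
open Real EuclideanGeometry

/-!
Rescaling row `i` and column `i` of the cosine matrix by `‖v i‖` turns it into the Gram matrix of
the vectors `v i`, so for nonzero vectors its determinant vanishes exactly when they are linearly
dependent; more vectors than the dimension always are.
-/

section CosMatrix

variable {ι V : Type*} [Fintype ι] [DecidableEq ι] [NormedAddCommGroup V] [InnerProductSpace ℝ V]

theorem det_gram_eq_prod_norm_sq_mul_det_cos_angle (v : ι → V) :
    (Matrix.gram ℝ v).det =
      (∏ i, ‖v i‖) ^ 2 *
        (Matrix.of fun i j ↦ Real.cos (InnerProductGeometry.angle (v i) (v j))).det := by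
  set C : Matrix ι ι ℝ := Matrix.of fun i j ↦ Real.cos (InnerProductGeometry.angle (v i) (v j))
  have gram_eq : Matrix.gram ℝ v =
      Matrix.of fun i j ↦ ‖v i‖ * Matrix.of (fun i j ↦ ‖v j‖ * C i j) i j := by
    ext i j
    calc inner ℝ (v i) (v j) = C i j * (‖v i‖ * ‖v j‖) :=
          (InnerProductGeometry.cos_angle_mul_norm_mul_norm (v i) (v j)).symm
      _ = ‖v i‖ * (‖v j‖ * C i j) := by ring
  rw [gram_eq, Matrix.det_mul_column, Matrix.det_mul_row]
  ring

theorem det_cos_angle_eq_zero_iff_not_linearIndependent {v : ι → V} (hv : ∀ i, v i ≠ 0) :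
    (Matrix.of fun i j ↦ Real.cos (InnerProductGeometry.angle (v i) (v j))).det = 0 ↔
      ¬ LinearIndependent ℝ v := by
  have prod_norm_sq_ne_zero : (∏ i, ‖v i‖) ^ 2 ≠ 0 :=
    pow_ne_zero 2 (Finset.prod_ne_zero_iff.mpr fun i _ ↦ norm_ne_zero_iff.mpr (hv i))
  rw [← Matrix.det_gram_ne_zero_iff_linearIndependent, not_not,
    det_gram_eq_prod_norm_sq_mul_det_cos_angle, mul_eq_zero_iff_left prod_norm_sq_ne_zero]

theorem cos_matrix_det_eq_zero_general {P : Type*} [MetricSpace P] [NormedAddTorsor V P]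
    [FiniteDimensional ℝ V] (hcard : Module.finrank ℝ V < Fintype.card ι)
    {p : P} {X : ι → P} (hX : ∀ i, X i ≠ p) :
    (Matrix.of fun i j ↦ Real.cos (∠ (X i) p (X j))).det = 0 :=
  (det_cos_angle_eq_zero_iff_not_linearIndependent fun i ↦ vsub_ne_zero.mpr (hX i)).mpr
    fun hindep ↦ hcard.not_ge hindep.fintype_card_le_finrank

end CosMatrix

theorem cos_matrix_det_eq_zero
    (n : ℕ) (hn : 1 ≤ n) (X : Fin (n + 2) → EuclideanSpace ℝ (Fin n))
    (hX : ∀ i : Fin (n + 1), X i.succ ≠ X 0) :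
    Matrix.det (fun i j : Fin (n + 1) =>
      Real.cos (∠ (X i.succ) (X 0) (X j.succ))) = 0 :=
  cos_matrix_det_eq_zero_general (by simp) hX
end
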